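/- Let S be a finitely generated submonoid of ℕ^n, regarded as a subset of ℝ^n, let C := ℝ_{≥0}·S be the convex cone generated by S, and let ℤS denote the subgroup of ℝ^n generated by S. Define T := ⋃_τ ( ℤ(S ∩ τ) ∩ relint(τ) ), where the union ranges over all faces τ of C, ℤ(S ∩ τ) is the subgroup of ℝ^n generated by S ∩ τ, and relint(τ) is the relative (intrinsic) interior of τ. Then: (i) T is a submonoid of ℤS containing S; (ii) T is semisaturated in ℤS; and (iii) every submonoid U of ℤS with S ⊆ U that is semisaturated in ℤS contains T. Hence T is the semisaturation S⁺ of S. -/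

import Mathlib

open Matrix

open Filter Topology PointedCone

/-!
For `x` in the cone `C` let `F x` be the set of `y ∈ C` with `N • x - y ∈ C` for some `N ≥ 0`.
It is the smallest face of `C` containing `x`, the face whose relative interior contains `x`, and
an exposed face by Farkas' lemma, since `C` is finitely generated. So `T` is the set of `x ∈ C`
with `x ∈ ℤ(S ∩ F x)`. As `F x ⊆ F (x + y)` for `y ∈ C`, this set is closed under addition; as
`F (k • x) ⊆ F x` for `k : ℕ`, writing `x = 3 • x - 2 • x` shows that it is semisaturated.

For minimality let `x ∈ T`, and write `x` as a combination with positive real coefficients of a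
finite set `G ⊆ S` such that `x ∈ ℤG`. Rounding down the coefficients of `k • x` leaves a remainder
in a bounded part of the discrete group `ℤS`, hence one of finitely many. Adding a large multiple
of `∑ f ∈ G, f` moves all of them into the monoid generated by `G`, and the rounded coefficients
of `k • x` eventually provide that multiple. So `k • x ∈ S` for all large `k`. A semisaturated
submonoid that contains `k • x` for all large `k` contains `x`: if it contains `k • x` for all
`k > K ≥ 1`, then it contains `2 • (K • x)` and `3 • (K • x)`, hence `K • x`.
-/

section Semisaturation

variable {M : Type*} [AddGroup M]

/-- `U` is semisaturated in the subgroup `A`. The inclusion `U ≤ A` is not part of the notion. -/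
def IsSemisaturatedIn (U : AddSubmonoid M) (A : AddSubgroup M) : Prop :=
  ∀ m ∈ A, 2 • m ∈ U → 3 • m ∈ U → m ∈ U

/-- The semisaturation `S⁺` of `S`: the smallest submonoid that contains `S` and is semisaturated
in the subgroup generated by `S`. -/
def semisaturation (S : AddSubmonoid M) : AddSubmonoid M :=
  sInf {U | S ≤ U ∧ IsSemisaturatedIn U (AddSubgroup.closure (S : Set M))}

variable {S U : AddSubmonoid M}

theorem le_semisaturation (S : AddSubmonoid M) : S ≤ semisaturation S :=
  le_sInf fun _ hU => hU.1

theorem semisaturation_le (hSU : S ≤ U)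
    (hU : IsSemisaturatedIn U (AddSubgroup.closure (S : Set M))) : semisaturation S ≤ U :=
  sInf_le ⟨hSU, hU⟩

theorem semisaturation_le_closure (S : AddSubmonoid M) :
    semisaturation S ≤ (AddSubgroup.closure (S : Set M)).toAddSubmonoid :=
  semisaturation_le AddSubgroup.subset_closure fun _ hm _ _ => hm

theorem isSemisaturatedIn_semisaturation (S : AddSubmonoid M) :
    IsSemisaturatedIn (semisaturation S) (AddSubgroup.closure (S : Set M)) := by
  intro m hm h2 h3
  simp only [semisaturation, AddSubmonoid.mem_sInf, Set.mem_ofPred_eq] at h2 h3 ⊢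
  exact fun U hU => hU.2 m hm (h2 U hU) (h3 U hU)

theorem IsSemisaturatedIn.mem_of_eventually_nsmul_mem {A : AddSubgroup M}
    (hU : IsSemisaturatedIn U A) {x : M} (hx : x ∈ A) (h : ∀ᶠ k : ℕ in atTop, k • x ∈ U) :
    x ∈ U := by
  obtain ⟨K, hK⟩ := eventually_atTop.1 h
  induction K with
  | zero => simpa using hK 1 zero_le_one
  | succ K ih =>
    refine ih fun k hk => ?_
    obtain hlt | rfl := hk.lt_or_eq
    · exact hK k hlt
    · rcases K.eq_zero_or_pos with rfl | hpos
      · simp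
      · refine hU _ (nsmul_mem hx K) ?_ ?_ <;> rw [smul_smul] <;> exact hK _ (by lia)

end Semisaturation

section Hull

variable {R M : Type*} [Semiring R] [PartialOrder R] [IsOrderedRing R] [AddCommMonoid M]
  [Module R M]

theorem hull_image {M' : Type*} [AddCommMonoid M'] [Module R M'] (f : M →ₗ[R] M') (s : Set M) :
    hull R (f '' s) = (hull R s).map f :=
  (Submodule.map_span (f.restrictScalars {c : R // 0 ≤ c}) s).symm

theorem fg_hull_of_fg {S : AddSubmonoid M} (hS : S.FG) : (hull R (S : Set M)).FG := by
  obtain ⟨s, rfl⟩ := hS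
  exact ⟨s, Submodule.span_closure.symm⟩

theorem mem_hull_iff_exists_fin_sum {s : Set M} {x : M} :
    x ∈ hull R s ↔ ∃ (k : ℕ) (c : Fin k → R) (v : Fin k → M),
      (∀ i, 0 ≤ c i) ∧ (∀ i, v i ∈ s) ∧ x = ∑ i, c i • v i := by
  constructor
  · intro hx
    obtain ⟨k, c, v, rfl⟩ := Submodule.mem_span_set'.1 hx
    exact ⟨k, fun i => c i, fun i => v i, fun i => (c i).2, fun i => (v i).2, rfl⟩
  · rintro ⟨k, c, v, hc, hv, rfl⟩
    exact sum_mem fun i _ => PointedCone.smul_mem _ (hc i) (subset_hull (hv i))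

end Hull

section Farkas

variable {R M : Type*} [Field R] [LinearOrder R] [IsStrictOrderedRing R] [AddCommGroup M]
  [Module R M]

theorem exists_dual_neg_of_notMem_hull_image {ι : Type*} (s : Finset ι) (v : ι → M) {x : M}
    (hx : x ∉ hull R (v '' s)) : ∃ φ : Module.Dual R M, (∀ i ∈ s, 0 ≤ φ (v i)) ∧ φ x < 0 := by
  classical
  induction s using Finset.induction_on generalizing v x with
  | empty =>
    have hx0 : -x ≠ 0 := by simpa using hx
    obtain ⟨φ, hφ⟩ := Module.Projective.exists_dual_eq_one R hx0
    rw [map_neg, neg_eq_iff_eq_neg] at hφ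
    exact ⟨φ, by simp, by simp [hφ]⟩
  | insert a s _ ih =>
    rw [Finset.coe_insert, Set.image_insert_eq] at hx
    obtain ⟨φ, hφs, hφx⟩ := ih v fun h => hx (Submodule.span_mono (Set.subset_insert _ _) h)
    rcases le_or_gt 0 (φ (v a)) with hφa | hφa
    · exact ⟨φ, (Finset.forall_mem_insert ..).2 ⟨hφa, hφs⟩, hφx⟩
    -- Otherwise apply the induction hypothesis after projecting along `v a` onto `ker φ`.
    obtain ⟨π, hπ⟩ : ∃ π : M →ₗ[R] M, ∀ y, π y = y - ((φ (v a))⁻¹ * φ y) • v a :=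
      ⟨LinearMap.id - ((φ (v a))⁻¹ • φ).smulRight (v a), fun y => by simp⟩
    have hπx : π x ∉ hull R ((π ∘ v) '' s) := by
      intro h
      rw [Set.image_comp, hull_image] at h
      obtain ⟨z, hz, hzx⟩ := h
      rw [LinearMap.coe_restrictScalars] at hzx
      have hφz : 0 ≤ φ z := by
        have hφ : φ ∈ dual (Module.Dual.eval R M) (v '' s) := Set.forall_mem_image.2 hφs
        rw [← dual_hull] at hφ
        exact hφ hz
      have hxz : x = z + ((φ (v a))⁻¹ * (φ x - φ z)) • v a := by
        rw [hπ, hπ, eq_comm, sub_eq_iff_eq_add] at hzx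
        rw [mul_sub, sub_smul]
        nth_rewrite 1 [hzx]
        abel
      refine hx (hxz ▸ add_mem (Submodule.span_mono (Set.subset_insert _ _) hz)
        (PointedCone.smul_mem _ ?_ (subset_hull (Set.mem_insert _ _))))
      exact mul_nonneg_of_nonpos_of_nonpos (inv_nonpos.2 hφa.le) (by linarith)
    obtain ⟨ψ, hψs, hψx⟩ := ih (π ∘ v) hπx
    refine ⟨ψ ∘ₗ π, (Finset.forall_mem_insert ..).2 ⟨?_, hψs⟩, hψx⟩
    simp [hπ, hφa.ne]

theorem exists_mem_dual_neg_of_fg_of_notMem {C : PointedCone R M} (hC : C.FG) {x : M}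
    (hx : x ∉ C) : ∃ φ ∈ dual (Module.Dual.eval R M) (C : Set M), φ x < 0 := by
  obtain ⟨s, rfl⟩ := hC
  obtain ⟨φ, hφs, hφx⟩ := exists_dual_neg_of_notMem_hull_image s id (by simpa using hx)
  refine ⟨φ, ?_, hφx⟩
  rw [dual_hull]
  exact fun y hy => hφs y hy

end Farkas

section Faces

variable {R M : Type*} [Field R] [LinearOrder R] [IsStrictOrderedRing R] [AddCommGroup M]
  [Module R M] {C F : PointedCone R M} {φ : Module.Dual R M} {x y : M}

/-- The exposed face of `C` on which `φ` vanishes; it is meant for `φ` in the dual cone of `C`. -/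
def exposedFace (C : PointedCone R M) (φ : Module.Dual R M) : PointedCone R M :=
  C ⊓ ofSubmodule (LinearMap.ker φ)

theorem isFaceOf_exposedFace (hφ : φ ∈ dual (Module.Dual.eval R M) (C : Set M)) :
    (exposedFace C φ).IsFaceOf C := by
  refine .of_mem_of_add_mem_left inf_le_left fun {y z} hy hz hyz => ⟨hy, ?_⟩
  have h : φ y + φ z = 0 := by simpa using hyz.2
  exact ((add_eq_zero_iff_of_nonneg (hφ hy) (hφ hz)).1 h).1

theorem hull_inter_eq_of_isFaceOf {s : Set M} (hF : F.IsFaceOf (hull R s)) :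
    hull R (s ∩ F) = F := by
  refine le_antisymm (Submodule.span_le.2 Set.inter_subset_right) fun y hyF => ?_
  have hy := hF.le hyF
  induction hy using Submodule.span_induction with
  | mem y hy => exact subset_hull ⟨hy, hyF⟩
  | zero => exact zero_mem _
  | add y z hy hz ihy ihz =>
    exact add_mem (ihy (hF.mem_of_add_mem_left hy hz hyF)) (ihz (hF.mem_of_add_mem_right hy hz hyF))
  | smul a y _ ih =>
    obtain ⟨a, ha⟩ := a
    obtain rfl | hpos := ha.eq_or_lt
    · simp [Nonneg.mk_smul]
    · exact Submodule.smul_mem _ ⟨a, ha⟩ (ih ((F.smul_mem_iff hpos).1 hyF))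

/-- The smallest face of `C` that contains `x`, for `x ∈ C`: the points `y` of `C` such that the
segment from `y` to `x` can be prolonged beyond `x` inside `C`, up to a positive scaling. -/
def minimalFace (C : PointedCone R M) (x : M) : PointedCone R M where
  carrier := {y | y ∈ C ∧ ∃ N : R, 0 ≤ N ∧ N • x - y ∈ C}
  zero_mem' := ⟨zero_mem C, 0, le_rfl, by simp⟩
  add_mem' := by
    rintro y z ⟨hy, N, hN, hNy⟩ ⟨hz, K, hK, hKz⟩
    refine ⟨add_mem hy hz, N + K, add_nonneg hN hK, ?_⟩
    rw [add_smul, add_sub_add_comm]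
    exact add_mem hNy hKz
  smul_mem' := by
    rintro ⟨a, ha⟩ y ⟨hy, N, hN, hNy⟩
    refine ⟨C.smul_mem ha hy, a * N, mul_nonneg ha hN, ?_⟩
    simpa [mul_smul, smul_sub] using PointedCone.smul_mem C ha hNy

theorem self_mem_minimalFace (hx : x ∈ C) : x ∈ minimalFace C x := ⟨hx, 1, zero_le_one, by simp⟩

theorem minimalFace_le (C : PointedCone R M) (x : M) : minimalFace C x ≤ C := fun _ hy => hy.1

theorem isFaceOf_minimalFace (C : PointedCone R M) (x : M) : (minimalFace C x).IsFaceOf C := by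
  refine .of_mem_of_add_mem_left (minimalFace_le C x) ?_
  rintro y z hy hz ⟨-, N, hN, hNyz⟩
  exact ⟨hy, N, hN, by simpa [sub_add_eq_sub_sub] using add_mem hNyz hz⟩

theorem minimalFace_le_of_mem (hF : F.IsFaceOf C) (hx : x ∈ F) : minimalFace C x ≤ F := by
  rintro y ⟨hy, N, hN, hNy⟩
  exact hF.mem_of_add_mem_left hy hNy (by simpa using PointedCone.smul_mem F hN hx)

theorem minimalFace_le_minimalFace_add (hx : x ∈ C) (hy : y ∈ C) :
    minimalFace C x ≤ minimalFace C (x + y) :=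
  minimalFace_le_of_mem (isFaceOf_minimalFace C _) <|
    (isFaceOf_minimalFace C _).mem_of_add_mem_left hx hy (self_mem_minimalFace (add_mem hx hy))

theorem minimalFace_nsmul_le (hx : x ∈ C) (k : ℕ) : minimalFace C (k • x) ≤ minimalFace C x :=
  minimalFace_le_of_mem (isFaceOf_minimalFace C x) (nsmul_mem (self_mem_minimalFace hx) k)

theorem exists_pos_smul_sub_mem (hx : x ∈ C) (hy : y ∈ minimalFace C x) :
    ∃ N : R, 0 < N ∧ N • x - y ∈ C := by
  obtain ⟨-, N, hN, hNy⟩ := hy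
  refine ⟨N + 1, by positivity, ?_⟩
  rw [add_smul, one_smul, add_sub_right_comm]
  exact add_mem hNy hx

theorem minimalFace_eq_of_isFaceOf (hF : F.IsFaceOf C) (hx : x ∈ F) :
    minimalFace F x = minimalFace C x := by
  refine le_antisymm (fun y ⟨hy, N, hN, hNy⟩ => ⟨hF.le hy, N, hN, hF.le hNy⟩) fun y hy => ?_
  have hyF : y ∈ F := minimalFace_le_of_mem hF hx hy
  obtain ⟨hyC, N, hN, hNy⟩ := hy
  refine ⟨hyF, N, hN, hF.mem_of_add_mem_left hNy hyC ?_⟩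
  simpa using PointedCone.smul_mem F hN hx

theorem exists_mem_dual_pos_of_notMem_minimalFace (hC : C.FG) (hx : x ∈ C) (hy : y ∈ C)
    (hyx : y ∉ minimalFace C x) :
    ∃ φ ∈ dual (Module.Dual.eval R M) (C : Set M), φ x = 0 ∧ 0 < φ y := by
  have hny : -y ∉ C ⊔ hull R {-x} := by
    rw [Submodule.mem_sup]
    rintro ⟨z, hz, w, hw, hzw⟩
    obtain ⟨⟨N, hN⟩, rfl⟩ := Submodule.mem_span_singleton.1 hw
    refine hyx ⟨hy, N, hN, ?_⟩
    rw [Nonneg.mk_smul, smul_neg, ← sub_eq_add_neg, sub_eq_iff_eq_add, neg_add_eq_sub] at hzw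
    exact hzw ▸ hz
  obtain ⟨φ, hφ, hφy⟩ :=
    exists_mem_dual_neg_of_fg_of_notMem (hC.sup (Submodule.fg_span_singleton _)) hny
  rw [dual_sup] at hφ
  have hφx : 0 ≤ -φ x := by simpa using hφ (Or.inr (subset_hull rfl))
  have hφC : φ ∈ dual (Module.Dual.eval R M) (C : Set M) := fun z hz => hφ (Or.inl hz)
  exact ⟨φ, hφC, le_antisymm (by linarith) (hφC hx), by simpa using hφy⟩

theorem exists_exposedFace_eq_minimalFace (hC : C.FG) (hx : x ∈ C) :
    ∃ φ ∈ dual (Module.Dual.eval R M) (C : Set M), exposedFace C φ = minimalFace C x := by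
  obtain ⟨s, rfl⟩ := id hC
  have hsep (f : M) : ∃ φ ∈ dual (Module.Dual.eval R M) (hull R (s : Set M) : Set M), φ x = 0 ∧
      (f ∈ s → f ∉ minimalFace (hull R (s : Set M)) x → 0 < φ f) := by
    by_cases hf : f ∈ s ∧ f ∉ minimalFace (hull R (s : Set M)) x
    · obtain ⟨φ, hφ, hφx, hφf⟩ :=
        exists_mem_dual_pos_of_notMem_minimalFace hC hx (subset_hull hf.1) hf.2
      exact ⟨φ, hφ, hφx, fun _ _ => hφf⟩
    · exact ⟨0, zero_mem _, rfl, fun h h' => (hf ⟨h, h'⟩).elim⟩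
  choose φ hφ hφx hφf using hsep
  have hsum := sum_mem fun f (_ : f ∈ s) => hφ f
  refine ⟨∑ f ∈ s, φ f, hsum, le_antisymm ?_ ?_⟩
  · rw [← hull_inter_eq_of_isFaceOf (isFaceOf_exposedFace hsum), Submodule.span_le]
    rintro f ⟨hfs, -, hf⟩
    by_contra hfx
    have hpos : 0 < ∑ g ∈ s, φ g f := Finset.sum_pos' (fun g _ => hφ g (subset_hull hfs))
      ⟨f, hfs, hφf f hfs hfx⟩
    exact hpos.ne' (by simpa using hf)
  · exact minimalFace_le_of_mem (isFaceOf_exposedFace hsum) ⟨hx, by simp [hφx]⟩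

end Faces

section IntrinsicInterior

theorem mem_intrinsicInterior_iff_mem_nhdsWithin {𝕜 V P : Type*} [Ring 𝕜] [AddCommGroup V]
    [Module 𝕜 V] [TopologicalSpace P] [AddTorsor V P] {s : Set P} {x : P} :
    x ∈ intrinsicInterior 𝕜 s ↔ x ∈ affineSpan 𝕜 s ∧ s ∈ 𝓝[affineSpan 𝕜 s] x := by
  rw [mem_intrinsicInterior]
  constructor
  · rintro ⟨y, hy, rfl⟩
    exact ⟨y.2, preimage_coe_mem_nhds_subtype.1 (mem_interior_iff_mem_nhds.1 hy)⟩
  · rintro ⟨hx, hs⟩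
    exact ⟨⟨x, hx⟩, mem_interior_iff_mem_nhds.2 (preimage_coe_mem_nhds_subtype.2 hs), rfl⟩

theorem mem_intrinsicInterior_pointedCone_iff {E : Type*} [AddCommGroup E] [Module ℝ E]
    [TopologicalSpace E] {C : PointedCone ℝ E} {x : E} :
    x ∈ intrinsicInterior ℝ (C : Set E) ↔
      x ∈ C ∧ (C : Set E) ∈ 𝓝[Submodule.span ℝ (C : Set E)] x := by
  have hspan : (affineSpan ℝ (C : Set E) : Set E) = Submodule.span ℝ (C : Set E) := by
    rw [← affineSpan_insert_zero, Set.insert_eq_of_mem (zero_mem C)]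
  rw [← hspan]
  exact ⟨fun h => ⟨intrinsicInterior_subset h, (mem_intrinsicInterior_iff_mem_nhdsWithin.1 h).2⟩,
    fun h => mem_intrinsicInterior_iff_mem_nhdsWithin.2 ⟨subset_affineSpan ℝ _ h.1, h.2⟩⟩

theorem mem_minimalFace_of_mem_intrinsicInterior {E : Type*} [AddCommGroup E] [Module ℝ E]
    [TopologicalSpace E] [IsTopologicalAddGroup E] [ContinuousSMul ℝ E] {C : PointedCone ℝ E}
    {x y : E} (hx : x ∈ intrinsicInterior ℝ (C : Set E)) (hy : y ∈ C) : y ∈ minimalFace C x := by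
  obtain ⟨hxC, hC⟩ := mem_intrinsicInterior_pointedCone_iff.1 hx
  have hlim : Tendsto (fun t : ℝ => x + t • (x - y)) (𝓝[>] 0)
      (𝓝[Submodule.span ℝ (C : Set E)] x) := by
    refine tendsto_nhdsWithin_iff.2 ⟨?_, .of_forall fun t => ?_⟩
    · exact tendsto_nhdsWithin_of_tendsto_nhds (Continuous.tendsto' (by fun_prop) _ _ (by simp))
    · have hxspan := Submodule.subset_span (R := ℝ) hxC
      exact add_mem hxspan (Submodule.smul_mem _ t (sub_mem hxspan (Submodule.subset_span hy)))
  obtain ⟨t, hxt, ht : 0 < t⟩ := ((hlim.eventually_mem hC).and self_mem_nhdsWithin).exists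
  have hsmul : t • ((t⁻¹ + 1) • x - y) = x + t • (x - y) := by
    rw [smul_sub, add_smul, smul_add, smul_inv_smul₀ ht.ne', one_smul, add_sub_assoc, ← smul_sub]
  exact ⟨hy, t⁻¹ + 1, by positivity, (C.smul_mem_iff ht).1 (hsmul ▸ hxt)⟩

variable {E : Type*} [NormedAddCommGroup E] [NormedSpace ℝ E] [FiniteDimensional ℝ E]
  {C F : PointedCone ℝ E} {x : E}

theorem mem_intrinsicInterior_of_minimalFace_eq (hxC : x ∈ C) (hx : minimalFace C x = C) :
    x ∈ intrinsicInterior ℝ (C : Set E) := by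
  obtain ⟨y, hy⟩ := Set.Nonempty.intrinsicInterior C.convex ⟨x, hxC⟩
  rw [mem_intrinsicInterior_pointedCone_iff] at hy
  obtain ⟨N, hN, hz⟩ := exists_pos_smul_sub_mem hxC (hx ▸ hy.1)
  -- The homothety `w ↦ N • w - (N • x - y)` maps `x` to `y` and preserves the span of `C`.
  have hlim : Tendsto (fun w => N • w - (N • x - y)) (𝓝[Submodule.span ℝ (C : Set E)] x)
      (𝓝[Submodule.span ℝ (C : Set E)] y) := by
    refine tendsto_nhdsWithin_iff.2 ⟨?_, eventually_mem_nhdsWithin.mono fun w hw => ?_⟩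
    · exact tendsto_nhdsWithin_of_tendsto_nhds (Continuous.tendsto' (by fun_prop) _ _ (by simp))
    · exact sub_mem (Submodule.smul_mem _ N hw) (Submodule.subset_span hz)
  refine mem_intrinsicInterior_pointedCone_iff.2
    ⟨hxC, (hlim.eventually_mem hy.2).mono fun w hw => (C.smul_mem_iff hN).1 ?_⟩
  simpa using add_mem (SetLike.mem_coe.1 hw) hz

theorem mem_intrinsicInterior_iff_minimalFace_eq (hF : F.IsFaceOf C) :
    x ∈ intrinsicInterior ℝ (F : Set E) ↔ x ∈ C ∧ minimalFace C x = F := by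
  constructor
  · intro hx
    have hxF : x ∈ F := intrinsicInterior_subset hx
    refine ⟨hF.le hxF, le_antisymm (minimalFace_le_of_mem hF hxF) fun y hy => ?_⟩
    rw [← minimalFace_eq_of_isFaceOf hF hxF]
    exact mem_minimalFace_of_mem_intrinsicInterior hx hy
  · rintro ⟨hx, rfl⟩
    have hx' := self_mem_minimalFace hx
    exact mem_intrinsicInterior_of_minimalFace_eq hx' (minimalFace_eq_of_isFaceOf hF hx')

end IntrinsicInterior

section MinimalFaceSubmonoid

variable (R : Type*) {M : Type*} [Field R] [LinearOrder R] [IsStrictOrderedRing R]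
  [AddCommGroup M] [Module R M]

/-- The submonoid of the points `x` of the cone generated by `S` that lie in the subgroup generated
by the elements of `S` on the minimal face containing `x`. -/
def minimalFaceSubmonoid (S : AddSubmonoid M) : AddSubmonoid M where
  carrier := {x | x ∈ hull R (S : Set M) ∧
    x ∈ AddSubgroup.closure ((S : Set M) ∩ minimalFace (hull R (S : Set M)) x)}
  zero_mem' := ⟨zero_mem _, zero_mem _⟩
  add_mem' {x y} := by
    rintro ⟨hx, hxS⟩ ⟨hy, hyS⟩
    refine ⟨add_mem hx hy, add_mem (AddSubgroup.closure_mono ?_ hxS)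
      (AddSubgroup.closure_mono ?_ hyS)⟩
    · exact Set.inter_subset_inter_right _ (minimalFace_le_minimalFace_add hx hy)
    · rw [add_comm x y]
      exact Set.inter_subset_inter_right _ (minimalFace_le_minimalFace_add hy hx)

variable {R} {S : AddSubmonoid M} {x : M}

theorem mem_minimalFaceSubmonoid : x ∈ minimalFaceSubmonoid R S ↔ x ∈ hull R (S : Set M) ∧
    x ∈ AddSubgroup.closure ((S : Set M) ∩ minimalFace (hull R (S : Set M)) x) :=
  Iff.rfl

theorem le_minimalFaceSubmonoid (S : AddSubmonoid M) : S ≤ minimalFaceSubmonoid R S := fun _ hx =>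
  have hx' := subset_hull hx
  ⟨hx', AddSubgroup.subset_closure ⟨hx, self_mem_minimalFace hx'⟩⟩

theorem isSemisaturatedIn_minimalFaceSubmonoid (S : AddSubmonoid M) (A : AddSubgroup M) :
    IsSemisaturatedIn (minimalFaceSubmonoid R S) A := by
  rintro m - ⟨h2, h2S⟩ ⟨-, h3S⟩
  have hm : m ∈ hull R (S : Set M) := by
    rwa [← Nat.cast_smul_eq_nsmul R, PointedCone.smul_mem_iff _ (by simp)] at h2
  have hle (k : ℕ) := AddSubgroup.closure_mono <|
    Set.inter_subset_inter_right (S : Set M) (minimalFace_nsmul_le hm k)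
  refine ⟨hm, ?_⟩
  convert sub_mem (hle 3 h3S) (hle 2 h2S) using 1
  abel

theorem exists_finset_sum_pos_smul_eq {s : Set M} (hx : x ∈ hull R s) {G₀ : Finset M}
    (hG₀ : (G₀ : Set M) ⊆ s ∩ minimalFace (hull R s) x) :
    ∃ G : Finset M, G₀ ⊆ G ∧ (G : Set M) ⊆ s ∧
      ∃ c : M → R, (∀ f ∈ G, 0 < c f) ∧ x = ∑ f ∈ G, c f • f := by
  classical
  obtain ⟨N, hN, hNx⟩ := exists_pos_smul_sub_mem hx (sum_mem fun f hf => (hG₀ hf).2)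
  obtain ⟨d, hds, hd, hdx⟩ := mem_hull_set.1 hNx
  let ind : M → R := fun f => if f ∈ G₀ then 1 else 0
  have hind (f : M) : 0 ≤ ind f := by positivity
  refine ⟨G₀ ∪ d.support, Finset.subset_union_left, ?_, fun f => N⁻¹ * (ind f + d f), ?_, ?_⟩
  · rw [Finset.coe_union]
    exact Set.union_subset (fun f hf => (hG₀ hf).1) hds
  · intro f hf
    obtain hf | hf := Finset.mem_union.1 hf
    · have : ind f = 1 := if_pos hf
      have := hd f
      positivity
    · have : 0 < d f := (hd f).lt_of_ne' (Finsupp.mem_support_iff.1 hf)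
      have := hind f
      positivity
  · have hind_sum : ∑ f ∈ G₀ ∪ d.support, ind f • f = ∑ f ∈ G₀, f := by
      simp [ind, ite_smul, Finset.sum_ite_mem]
    have hd_sum : ∑ f ∈ G₀ ∪ d.support, d f • f = N • x - ∑ f ∈ G₀, f := by
      rw [← hdx, Finsupp.sum_of_support_subset d Finset.subset_union_right _ (by simp)]
    simp only [mul_smul, ← Finset.smul_sum, add_smul, Finset.sum_add_distrib]
    rw [hind_sum, hd_sum, add_sub_cancel, inv_smul_smul₀ hN.ne']

end MinimalFaceSubmonoid

section LargeMultiples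

theorem eventually_add_nsmul_sum_mem_closure {M : Type*} [AddCommGroup M] {G : Finset M} {x : M}
    (hx : x ∈ AddSubgroup.closure (G : Set M)) :
    ∀ᶠ b : ℕ in atTop, x + b • ∑ f ∈ G, f ∈ AddSubmonoid.closure (G : Set M) := by
  classical
  rw [← AddSubgroup.mem_toAddSubmonoid, AddSubgroup.closure_toAddSubmonoid] at hx
  have hG : ∑ f ∈ G, f ∈ AddSubmonoid.closure (G : Set M) :=
    sum_mem fun f hf => AddSubmonoid.subset_closure hf
  suffices ∃ b : ℕ, x + b • ∑ f ∈ G, f ∈ AddSubmonoid.closure (G : Set M) by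
    obtain ⟨b, hb⟩ := this
    filter_upwards [eventually_ge_atTop b] with k hk
    rw [← Nat.add_sub_of_le hk, add_nsmul, ← add_assoc]
    exact add_mem hb (nsmul_mem hG _)
  induction hx using AddSubmonoid.closure_induction with
  | mem f hf =>
    obtain hf | hf := hf
    · exact ⟨0, by simpa using AddSubmonoid.subset_closure hf⟩
    · refine ⟨1, ?_⟩
      rw [one_nsmul, ← Finset.add_sum_erase G _ hf, add_neg_cancel_left]
      exact sum_mem fun g hg => AddSubmonoid.subset_closure (Finset.mem_of_mem_erase hg)
  | zero => exact ⟨0, by simp⟩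
  | add y z _ _ hy hz =>
    obtain ⟨b, hb⟩ := hy
    obtain ⟨c, hc⟩ := hz
    refine ⟨b + c, ?_⟩
    rw [add_nsmul, add_add_add_comm]
    exact add_mem hb hc

theorem norm_sub_sum_floor_nsmul_le {E : Type*} [SeminormedAddCommGroup E] [NormedSpace ℝ E]
    (G : Finset E) {c : E → ℝ} (hc : ∀ f ∈ G, 0 ≤ c f) :
    ‖∑ f ∈ G, c f • f - ∑ f ∈ G, ⌊c f⌋₊ • f‖ ≤ ∑ f ∈ G, ‖f‖ := by
  rw [← Finset.sum_sub_distrib]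
  refine norm_sum_le_of_le G fun f hf => ?_
  rw [← Nat.cast_smul_eq_nsmul ℝ, ← sub_smul, norm_smul]
  refine mul_le_of_le_one_left (norm_nonneg f) ?_
  rw [Real.norm_of_nonneg (sub_nonneg.2 (Nat.floor_le (hc f hf)))]
  linarith [Nat.lt_floor_add_one (c f)]

variable {E : Type*} [NormedAddCommGroup E]

theorem finite_inter_closedBall [ProperSpace E] (A : AddSubgroup E) [DiscreteTopology A] (r : ℝ) :
    ((A : Set E) ∩ Metric.closedBall 0 r).Finite := by
  rw [Set.inter_comm]
  exact Metric.finite_isBounded_inter_isClosed DiscreteTopology.isDiscrete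
    Metric.isBounded_closedBall AddSubgroup.isClosed_of_discrete

theorem eventually_nsmul_mem_closure_of_pos [NormedSpace ℝ E] [ProperSpace E] {G : Finset E}
    [DiscreteTopology (AddSubgroup.closure (G : Set E))] {x : E}
    (hx : x ∈ AddSubgroup.closure (G : Set E)) {c : E → ℝ} (hc : ∀ f ∈ G, 0 < c f)
    (hxc : x = ∑ f ∈ G, c f • f) :
    ∀ᶠ k : ℕ in atTop, k • x ∈ AddSubmonoid.closure (G : Set E) := by
  obtain ⟨b, hb⟩ : ∃ b : ℕ, ∀ r ∈ (AddSubgroup.closure (G : Set E) : Set E) ∩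
      Metric.closedBall 0 (∑ f ∈ G, ‖f‖), r + b • ∑ f ∈ G, f ∈ AddSubmonoid.closure (G : Set E) :=
    ((eventually_all_finite (finite_inter_closedBall _ _)).2 fun r hr =>
      eventually_add_nsmul_sum_mem_closure hr.1).exists
  have hfloor : ∀ᶠ k : ℕ in atTop, ∀ f ∈ G, b ≤ ⌊(k : ℝ) * c f⌋₊ := by
    refine (eventually_all_finset G).2 fun f hf => ?_
    exact (tendsto_nat_floor_atTop.comp
      (tendsto_natCast_atTop_atTop.atTop_mul_const (hc f hf))).eventually_ge_atTop b
  filter_upwards [hfloor] with k hk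
  set r := k • x - ∑ f ∈ G, ⌊(k : ℝ) * c f⌋₊ • f with hr
  have hkx : k • x = ∑ f ∈ G, ((k : ℝ) * c f) • f := by
    rw [hxc, ← Nat.cast_smul_eq_nsmul ℝ, Finset.smul_sum]
    simp only [smul_smul]
  have hrA : r ∈ AddSubgroup.closure (G : Set E) :=
    sub_mem (nsmul_mem hx k) (sum_mem fun f hf => nsmul_mem (AddSubgroup.subset_closure hf) _)
  have hrnorm : ‖r‖ ≤ ∑ f ∈ G, ‖f‖ := by
    rw [hr, hkx]
    exact norm_sub_sum_floor_nsmul_le G fun f hf => mul_nonneg k.cast_nonneg (hc f hf).le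
  have hsplit : k • x = r + b • ∑ f ∈ G, f + ∑ f ∈ G, (⌊(k : ℝ) * c f⌋₊ - b) • f := by
    rw [add_assoc, Finset.smul_sum, ← Finset.sum_add_distrib, ← sub_eq_iff_eq_add, hr]
    congr 1
    refine Finset.sum_congr rfl fun f hf => ?_
    rw [← add_nsmul, Nat.add_sub_of_le (hk f hf)]
  rw [hsplit]
  exact add_mem (hb r ⟨hrA, by simpa using hrnorm⟩)
    (sum_mem fun f hf => nsmul_mem (AddSubmonoid.subset_closure hf) _)

theorem exists_finset_subset_mem_closure {M : Type*} [AddCommGroup M] {s : Set M} {x : M}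
    (hx : x ∈ AddSubgroup.closure s) :
    ∃ t : Finset M, (t : Set M) ⊆ s ∧ x ∈ AddSubgroup.closure (t : Set M) := by
  simp only [← Submodule.span_int_eq_addSubgroupClosure] at hx ⊢
  exact Submodule.mem_span_finite_of_mem_span hx

theorem minimalFaceSubmonoid_le [NormedSpace ℝ E] [ProperSpace E] {S U : AddSubmonoid E}
    [DiscreteTopology (AddSubgroup.closure (S : Set E))] (hSU : S ≤ U)
    (hU : IsSemisaturatedIn U (AddSubgroup.closure (S : Set E))) :
    minimalFaceSubmonoid ℝ S ≤ U := by
  rintro x ⟨hx, hxS⟩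
  obtain ⟨G₀, hG₀, hxG₀⟩ := exists_finset_subset_mem_closure hxS
  obtain ⟨G, hG₀G, hGS, c, hc, hxc⟩ := exists_finset_sum_pos_smul_eq hx hG₀
  have hGclosure : AddSubgroup.closure (G : Set E) ≤ AddSubgroup.closure (S : Set E) :=
    AddSubgroup.closure_mono hGS
  have : DiscreteTopology (AddSubgroup.closure (G : Set E)) := .of_subset ‹_› hGclosure
  have hxG := AddSubgroup.closure_mono (Finset.coe_subset.2 hG₀G) hxG₀
  refine hU.mem_of_eventually_nsmul_mem (hGclosure hxG) ?_
  filter_upwards [eventually_nsmul_mem_closure_of_pos hxG hc hxc] with k hk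
  exact hSU (AddSubmonoid.closure_le.2 hGS hk)

theorem semisaturation_eq_minimalFaceSubmonoid [NormedSpace ℝ E] [ProperSpace E]
    (S : AddSubmonoid E) [DiscreteTopology (AddSubgroup.closure (S : Set E))] :
    semisaturation S = minimalFaceSubmonoid ℝ S :=
  le_antisymm
    (semisaturation_le (le_minimalFaceSubmonoid S) (isSemisaturatedIn_minimalFaceSubmonoid S _))
    (minimalFaceSubmonoid_le (le_semisaturation S) (isSemisaturatedIn_semisaturation S))

end LargeMultiples

section UnionOfFaces

theorem coe_minimalFaceSubmonoid_eq_iUnion {E : Type*} [NormedAddCommGroup E] [NormedSpace ℝ E]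
    [FiniteDimensional ℝ E] {S : AddSubmonoid E} (hS : (hull ℝ (S : Set E)).FG) :
    (minimalFaceSubmonoid ℝ S : Set E) =
      ⋃ φ ∈ dual (Module.Dual.eval ℝ E) (hull ℝ (S : Set E) : Set E),
        (AddSubgroup.closure ((S : Set E) ∩ exposedFace (hull ℝ (S : Set E)) φ) : Set E) ∩
          intrinsicInterior ℝ (exposedFace (hull ℝ (S : Set E)) φ : Set E) := by
  ext x
  simp only [SetLike.mem_coe, mem_minimalFaceSubmonoid, Set.mem_iUnion₂, Set.mem_inter_iff,
    exists_prop]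
  constructor
  · rintro ⟨hx, hxS⟩
    obtain ⟨φ, hφ, hface⟩ := exists_exposedFace_eq_minimalFace hS hx
    exact ⟨φ, hφ, hface ▸ hxS,
      (mem_intrinsicInterior_iff_minimalFace_eq (isFaceOf_exposedFace hφ)).2 ⟨hx, hface.symm⟩⟩
  · rintro ⟨φ, hφ, hxS, hxint⟩
    obtain ⟨hx, hface⟩ :=
      (mem_intrinsicInterior_iff_minimalFace_eq (isFaceOf_exposedFace hφ)).1 hxint
    exact ⟨hx, hface ▸ hxS⟩

theorem semisaturation_eq_union_faces_general {E : Type*} [NormedAddCommGroup E] [NormedSpace ℝ E]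
    [FiniteDimensional ℝ E] {S : AddSubmonoid E} (hS : S.FG)
    [DiscreteTopology (AddSubgroup.closure (S : Set E))] :
    (semisaturation S : Set E) =
      ⋃ φ ∈ dual (Module.Dual.eval ℝ E) (hull ℝ (S : Set E) : Set E),
        (AddSubgroup.closure ((S : Set E) ∩ exposedFace (hull ℝ (S : Set E)) φ) : Set E) ∩
          intrinsicInterior ℝ (exposedFace (hull ℝ (S : Set E)) φ : Set E) := by
  have := FiniteDimensional.proper ℝ E
  rw [semisaturation_eq_minimalFaceSubmonoid, coe_minimalFaceSubmonoid_eq_iUnion (fg_hull_of_fg hS)]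

theorem discreteTopology_closure_of_forall_mem_range_intCast {ι : Type*} [Finite ι]
    {s : Set (ι → ℝ)} (hs : ∀ x ∈ s, ∀ i, x i ∈ Set.range ((↑) : ℤ → ℝ)) :
    DiscreteTopology (AddSubgroup.closure s) := by
  have := Fintype.ofFinite ι
  let L := Submodule.span ℤ (Set.range (Pi.basisFun ℝ ι))
  have hL : DiscreteTopology L := inferInstance
  have hsL : AddSubgroup.closure s ≤ L.toAddSubgroup := (AddSubgroup.closure_le _).2 fun x hx =>
    ((Pi.basisFun ℝ ι).mem_span_iff_repr_mem ℤ x).2 fun i => by simpa using hs x hx i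
  exact .of_subset hL hsL

theorem exists_dotProduct_eq_iff_exists_exposedFace_eq {R ι : Type*} [Field R] [LinearOrder R]
    [IsStrictOrderedRing R] [Fintype ι] {C : PointedCone R (ι → R)} {τ : Set (ι → R)} :
    (∃ u : ι → R, (∀ y ∈ C, 0 ≤ u ⬝ᵥ y) ∧ τ = {y ∈ C | u ⬝ᵥ y = 0}) ↔
      ∃ φ ∈ dual (Module.Dual.eval R (ι → R)) (C : Set (ι → R)), τ = exposedFace C φ := by
  classical
  exact (dotProductEquiv R ι).toEquiv.exists_congr fun u => Iff.rfl

end UnionOfFaces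

/-- Reid–Roberts: the semisaturation of a finitely generated submonoid `S ⊆ ℕ^n` is
`T = ⋃_τ ( ℤ(S ∩ τ) ∩ relint(τ) )`, the union being over the faces `τ` of the cone
`C = ℝ_{≥0}·S`.  Namely: `T` is a submonoid of `ℤS` containing `S`, `T` is semisaturated
in `ℤS`, and every semisaturated submonoid of `ℤS` containing `S` contains `T`. -/
theorem semisaturation_eq_union_faces (n : ℕ) (S : AddSubmonoid (Fin n → ℝ))
    (hfg : ∃ F : Finset (Fin n → ℝ), AddSubmonoid.closure (F : Set (Fin n → ℝ)) = S)
    (hnat : ∀ x ∈ S, ∀ i : Fin n, ∃ m : ℕ, x i = (m : ℝ))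
    (C : Set (Fin n → ℝ))
    (hC : C = {x | ∃ (k : ℕ) (c : Fin k → ℝ) (v : Fin k → (Fin n → ℝ)),
      (∀ i, 0 ≤ c i) ∧ (∀ i, v i ∈ S) ∧ x = ∑ i, c i • v i})
    (IsFace : Set (Fin n → ℝ) → Prop)
    (hFace : ∀ τ : Set (Fin n → ℝ), IsFace τ ↔
      ∃ u : Fin n → ℝ, (∀ y ∈ C, 0 ≤ u ⬝ᵥ y) ∧ τ = {y ∈ C | u ⬝ᵥ y = 0})
    (T : Set (Fin n → ℝ))
    (hT : T = ⋃ τ ∈ {τ : Set (Fin n → ℝ) | IsFace τ},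
      ((AddSubgroup.closure ((S : Set (Fin n → ℝ)) ∩ τ) : AddSubgroup (Fin n → ℝ)) : Set (Fin n → ℝ))
        ∩ intrinsicInterior ℝ τ) :
    -- (i) `T` is a submonoid of `ℤS` containing `S`
    ((0 : Fin n → ℝ) ∈ T ∧ (∀ x ∈ T, ∀ y ∈ T, x + y ∈ T) ∧
      (S : Set (Fin n → ℝ)) ⊆ T ∧
      T ⊆ (AddSubgroup.closure (S : Set (Fin n → ℝ)) : Set (Fin n → ℝ))) ∧
    -- (ii) `T` is semisaturated in `ℤS`
    (∀ m ∈ AddSubgroup.closure (S : Set (Fin n → ℝ)),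
      2 • m ∈ T → 3 • m ∈ T → m ∈ T) ∧
    -- (iii) `T` is contained in every semisaturated submonoid of `ℤS` containing `S`
    (∀ U : AddSubmonoid (Fin n → ℝ),
      (S : Set (Fin n → ℝ)) ⊆ (U : Set (Fin n → ℝ)) →
      (U : Set (Fin n → ℝ)) ⊆ (AddSubgroup.closure (S : Set (Fin n → ℝ)) : Set (Fin n → ℝ)) →
      (∀ m ∈ AddSubgroup.closure (S : Set (Fin n → ℝ)),
        2 • m ∈ U → 3 • m ∈ U → m ∈ U) →
      T ⊆ (U : Set (Fin n → ℝ))) := by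
  have hCS : C = hull ℝ (S : Set (Fin n → ℝ)) :=
    hC.trans (Set.ext fun x => mem_hull_iff_exists_fin_sum.symm)
  have : DiscreteTopology (AddSubgroup.closure (S : Set (Fin n → ℝ))) :=
    discreteTopology_closure_of_forall_mem_range_intCast fun x hx i =>
      (hnat x hx i).imp' (fun m : ℕ => (m : ℤ)) fun m hm => by simp [hm]
  have hTS : T = semisaturation S := by
    simp only [hT, semisaturation_eq_union_faces_general hfg, hFace, hCS, SetLike.mem_coe,
      exists_dotProduct_eq_iff_exists_exposedFace_eq, Set.mem_ofPred_eq, Set.iUnion_exists,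
      Set.biUnion_and', Set.iUnion_iUnion_eq_left]
  rw [hTS]
  exact ⟨⟨zero_mem _, fun _ hx _ hy => add_mem hx hy, le_semisaturation S,
    semisaturation_le_closure S⟩, isSemisaturatedIn_semisaturation S,
    fun U hSU _ hU => semisaturation_le hSU hU⟩
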